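/- There exists an absolute constant C₀ > 0 such that the following holds (sharpened error bound for leverage-score sampling based least-squares regression). Let X ∈ ℝ^{n×d} (n ≥ d ≥ 2, rank(X) = d), y ∈ ℝ^n, β_lsr = (XᵀX)⁻¹Xᵀy, and ε ∈ (0, 1), and let c ≥ C₀·(d ln d + d/ε). Perform leverage-score sampling with parameter c: with p_i = min{1, c·l_i/d} for the leverage scores l_i of X, keep row i independently with probability p_i and rescale it by 1/√p_i. Then with probability at least 0.8, every minimizer β̃ of the sampled objective β ↦ Σ_{i: δ_i=1} p_i⁻¹·(y_i − x^(i)β)² satisfies both ‖y − Xβ̃‖₂² ≤ (1 + ε)·‖y − Xβ_lsr‖₂² and ‖β_lsr − β̃‖₂² ≤ (ε/σ_min²(X))·‖y − Xβ_lsr‖₂². Moreover, if γ ∈ (0, 1] satisfies ‖UUᵀy‖₂ ≥ γ‖y‖₂, then also ‖β_lsr − β̃‖₂² ≤ ε·κ²(X)·(γ⁻² − 1)·‖β_lsr‖₂². -/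

import Mathlib

open Matrix BigOperators
open scoped Classical

/-- Euclidean norm of a real vector. -/
noncomputable def vnorm {m : ℕ} (v : Fin m → ℝ) : ℝ := Real.sqrt (∑ i, v i ^ 2)

/-- Smallest singular value of a real matrix: `min_{‖v‖=1} ‖Xv‖`. -/
noncomputable def sigmaMin {n d : ℕ} (X : Matrix (Fin n) (Fin d) ℝ) : ℝ :=
  sInf {r : ℝ | ∃ v : Fin d → ℝ, vnorm v = 1 ∧ r = vnorm (X.mulVec v)}

/-- Largest singular value of a real matrix: `max_{‖v‖=1} ‖Xv‖`. -/
noncomputable def sigmaMax {n d : ℕ} (X : Matrix (Fin n) (Fin d) ℝ) : ℝ :=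
  sSup {r : ℝ | ∃ v : Fin d → ℝ, vnorm v = 1 ∧ r = vnorm (X.mulVec v)}

/-- Probability of the outcome `e` when `e i = true` independently with probability `p i`. -/
noncomputable def bernWeight {n : ℕ} (p : Fin n → ℝ) (e : Fin n → Bool) : ℝ :=
  ∏ i, if e i then p i else 1 - p i

/-!
Let `r = y - Xβ` be the residual of the least-squares estimator and `W` the diagonal matrix of the
sampling weights. If `β̃` minimizes the sampled objective and `Ua = X(β - β̃)`, then comparing `β̃`
with `β` gives `μ²‖a‖² ≤ 4‖UᵀWr‖²` as soon as `UᵀWU ≥ μ`. Since `Uᵀr = 0`, the second moment of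
`UᵀWr` is at most `(d / c)‖r‖²`, so Markov's inequality costs only `d / ε`; the term `d ln d` pays
for the one-sided bound `UᵀWU ≥ 1/2`.

That bound comes from the potential `tr (1 + UᵀWU)^{-(m+1)}` with `m` of order `ln d`. Replacing the
random weights one at a time by the constant `1 - η` does not decrease its expectation, because by
the Sherman–Morrison formula each rank-one update acts on the inverse in closed form. Once all
weights are constant, `UᵀU = 1` makes the potential explicit, and Markov's inequality bounds the
probability of a small eigenvalue of `UᵀWU`.
-/

section Spectral

variable {ι : Type*} [Fintype ι]

theorem sum_mul_mul_sum_mul_le_of_monovary {w f g : ι → ℝ} (hw : ∀ i, 0 ≤ w i)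
    (hfg : Monovary f g) :
    (∑ i, w i * f i) * ∑ i, w i * g i ≤ (∑ i, w i) * ∑ i, w i * (f i * g i) := by
  have hnonneg : 0 ≤ ∑ i, ∑ j, w i * w j * ((f j - f i) * (g j - g i)) :=
    Finset.sum_nonneg fun i _ => Finset.sum_nonneg fun j _ =>
      mul_nonneg (mul_nonneg (hw i) (hw j)) (monovary_iff_forall_mul_nonneg.1 hfg i j)
  have hexpand : ∑ i, ∑ j, w i * w j * ((f j - f i) * (g j - g i)) =
      (∑ i, w i) * (∑ i, w i * (f i * g i)) + (∑ i, w i * (f i * g i)) * (∑ i, w i) -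
        ((∑ i, w i * f i) * (∑ i, w i * g i) + (∑ i, w i * g i) * (∑ i, w i * f i)) := by
    simp only [Finset.sum_mul_sum, ← Finset.sum_add_distrib, ← Finset.sum_sub_distrib]
    exact Finset.sum_congr rfl fun i _ => Finset.sum_congr rfl fun j _ => by ring
  linarith

variable [DecidableEq ι]

theorem exists_pow_eq_of_posSemidef {G : Matrix ι ι ℝ} (hG : G.PosSemidef) :
    ∃ (μ : ι → ℝ) (Q : Matrix ι ι ℝ), (∀ i, 0 ≤ μ i) ∧ Qᵀ * Q = 1 ∧
      ∀ k : ℕ, G ^ k = Q * diagonal (μ ^ k) * Qᵀ := by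
  refine ⟨hG.1.eigenvalues, hG.1.eigenvectorUnitary, hG.eigenvalues_nonneg, ?_, fun k => ?_⟩
  · simpa [star_eq_conjTranspose] using Unitary.coe_star_mul_self hG.1.eigenvectorUnitary
  · conv_lhs => rw [hG.1.spectral_theorem, ← map_pow, diagonal_pow, Unitary.conjStarAlgAut_apply]
    rfl

theorem dotProduct_mul_diagonal_mul_transpose_mulVec (Q : Matrix ι ι ℝ) (μ v : ι → ℝ) :
    v ⬝ᵥ (Q * diagonal μ * Qᵀ) *ᵥ v = ∑ i, μ i * (Qᵀ *ᵥ v) i ^ 2 := by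
  rw [← mulVec_mulVec, ← mulVec_mulVec, dotProduct_mulVec, ← mulVec_transpose]
  simp only [dotProduct, mulVec_diagonal]
  exact Finset.sum_congr rfl fun i _ => by ring

theorem trace_mul_diagonal_mul_transpose {Q : Matrix ι ι ℝ} (hQ : Qᵀ * Q = 1) (μ : ι → ℝ) :
    (Q * diagonal μ * Qᵀ).trace = ∑ i, μ i := by
  rw [trace_mul_comm, ← Matrix.mul_assoc, hQ, Matrix.one_mul, trace_diagonal]

theorem dotProduct_pow_mulVec_mul_le {G : Matrix ι ι ℝ} (hG : G.PosSemidef) (v : ι → ℝ)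
    (s t : ℕ) :
    (v ⬝ᵥ G ^ (s + 1) *ᵥ v) * (v ⬝ᵥ G ^ (t + 1) *ᵥ v) ≤
      (v ⬝ᵥ G *ᵥ v) * (v ⬝ᵥ G ^ (s + t + 1) *ᵥ v) := by
  obtain ⟨μ, Q, hμ, -, hpow⟩ := exists_pow_eq_of_posSemidef hG
  have hmoment (k : ℕ) : v ⬝ᵥ G ^ (k + 1) *ᵥ v = ∑ i, μ i * (Qᵀ *ᵥ v) i ^ 2 * μ i ^ k := by
    rw [hpow, dotProduct_mul_diagonal_mul_transpose_mulVec]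
    exact Finset.sum_congr rfl fun i _ => by rw [Pi.pow_apply]; ring
  have hmono : Monovary (μ ^ s) (μ ^ t) := ((monovary_self μ).pow_left₀ hμ s).pow_right₀ hμ t
  have hfirst : v ⬝ᵥ G *ᵥ v = ∑ i, μ i * (Qᵀ *ᵥ v) i ^ 2 := by simpa using hmoment 0
  rw [hmoment, hmoment, hmoment, hfirst]
  simpa only [Pi.pow_apply, ← pow_add] using
    sum_mul_mul_sum_mul_le_of_monovary (fun i => mul_nonneg (hμ i) (sq_nonneg ((Qᵀ *ᵥ v) i))) hmono

theorem trace_pow_le_of_dotProduct_mulVec_le {G : Matrix ι ι ℝ} (hG : G.PosSemidef) {g : ℝ}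
    (hg : ∀ v : ι → ℝ, v ⬝ᵥ G *ᵥ v ≤ g * (v ⬝ᵥ v)) (k : ℕ) :
    (G ^ k).trace ≤ Fintype.card ι * g ^ k := by
  obtain ⟨μ, Q, hμ, hQ, hpow⟩ := exists_pow_eq_of_posSemidef hG
  have hle (i : ι) : μ i ≤ g := by
    have hi := hg (Q *ᵥ Pi.single i 1)
    rw [← pow_one G, hpow, dotProduct_mul_diagonal_mul_transpose_mulVec, mulVec_mulVec, hQ,
      one_mulVec, dotProduct_mulVec, ← mulVec_transpose, mulVec_mulVec, hQ, one_mulVec] at hi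
    simpa [Pi.single_apply] using hi
  calc (G ^ k).trace = ∑ i, μ i ^ k := by rw [hpow, trace_mul_diagonal_mul_transpose hQ]; rfl
    _ ≤ ∑ _i : ι, g ^ k := Finset.sum_le_sum fun i _ => pow_le_pow_left₀ (hμ i) (hle i) k
    _ = Fintype.card ι * g ^ k := by simp

theorem dotProduct_mulVec_le_of_trace_pow_le {G : Matrix ι ι ℝ} (hG : G.PosSemidef) {g : ℝ}
    (hg : 0 ≤ g) {k : ℕ} (hk : k ≠ 0) (htr : (G ^ k).trace ≤ g ^ k) (v : ι → ℝ) :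
    v ⬝ᵥ G *ᵥ v ≤ g * (v ⬝ᵥ v) := by
  obtain ⟨μ, Q, hμ, hQ, hpow⟩ := exists_pow_eq_of_posSemidef hG
  rw [hpow, trace_mul_diagonal_mul_transpose hQ] at htr
  have hle (i : ι) : μ i ≤ g := le_of_pow_le_pow_left₀ hk hg <|
    (Finset.single_le_sum (f := μ ^ k) (fun j _ => pow_nonneg (hμ j) k)
      (Finset.mem_univ i)).trans htr
  have hnorm : v ⬝ᵥ v = ∑ i, (Qᵀ *ᵥ v) i ^ 2 := by
    have h := dotProduct_mul_diagonal_mul_transpose_mulVec Q (μ ^ 0) v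
    rw [← hpow 0, pow_zero, one_mulVec] at h
    simpa using h
  rw [← pow_one G, hpow, dotProduct_mul_diagonal_mul_transpose_mulVec, hnorm, Finset.mul_sum]
  exact Finset.sum_le_sum fun i _ => by rw [pow_one]; gcongr; exact hle i

end Spectral

section Inverse

theorem real_dotProduct_self_nonneg {ι : Type*} [Fintype ι] (v : ι → ℝ) : 0 ≤ v ⬝ᵥ v :=
  Finset.sum_nonneg fun i _ => mul_self_nonneg (v i)

variable {ι : Type*} [Fintype ι] [DecidableEq ι]

theorem dotProduct_inv_mulVec_le {H : Matrix ι ι ℝ} (hH : IsUnit H) {h : ℝ} (h0 : 0 < h)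
    (hle : ∀ z : ι → ℝ, h * (z ⬝ᵥ z) ≤ z ⬝ᵥ H *ᵥ z) (v : ι → ℝ) :
    v ⬝ᵥ H⁻¹ *ᵥ v ≤ h⁻¹ * (v ⬝ᵥ v) := by
  have hw := hle (H⁻¹ *ᵥ v)
  rw [mulVec_mulVec, mul_nonsing_inv _ ((isUnit_iff_isUnit_det H).1 hH), one_mulVec,
    dotProduct_comm _ v] at hw
  have hsq := real_dotProduct_self_nonneg (v - h • H⁻¹ *ᵥ v)
  simp only [sub_dotProduct, dotProduct_sub, smul_dotProduct, dotProduct_smul, smul_eq_mul,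
    dotProduct_comm (H⁻¹ *ᵥ v) v] at hsq
  rw [inv_mul_eq_div, le_div_iff₀ h0]
  nlinarith

theorem dotProduct_self_le_of_dotProduct_inv_mulVec_le {H : Matrix ι ι ℝ} (hH : H.PosDef) {g : ℝ}
    (h0 : 0 < g) {z : ι → ℝ} (hle : z ⬝ᵥ H⁻¹ *ᵥ z ≤ g * (z ⬝ᵥ z)) :
    z ⬝ᵥ z ≤ g * (z ⬝ᵥ H *ᵥ z) := by
  have hdet := (isUnit_iff_isUnit_det H).1 hH.isUnit
  have hsq : 0 ≤ (g • z - H⁻¹ *ᵥ z) ⬝ᵥ H *ᵥ (g • z - H⁻¹ *ᵥ z) := by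
    simpa using hH.posSemidef.dotProduct_mulVec_nonneg (g • z - H⁻¹ *ᵥ z)
  have hsymm : H⁻¹ *ᵥ z ⬝ᵥ H *ᵥ z = z ⬝ᵥ z := by
    rw [dotProduct_mulVec, ← mulVec_transpose, isHermitian_iff_isSymm.1 hH.1, mulVec_mulVec,
      mul_nonsing_inv _ hdet, one_mulVec]
  rw [mulVec_sub, mulVec_mulVec, mul_nonsing_inv _ hdet, one_mulVec, mulVec_smul] at hsq
  simp only [sub_dotProduct, dotProduct_sub, smul_dotProduct, dotProduct_smul, smul_eq_mul, hsymm,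
    dotProduct_comm (H⁻¹ *ᵥ z) z] at hsq
  nlinarith

theorem inv_add_smul_vecMulVec {K : Type*} [Field K] {A : Matrix ι ι K} (hA : IsUnit A)
    (u v : ι → K) {s : K} (hs : 1 + s * (v ⬝ᵥ A⁻¹ *ᵥ u) ≠ 0) :
    (A + s • vecMulVec u v)⁻¹ =
      A⁻¹ - (s / (1 + s * (v ⬝ᵥ A⁻¹ *ᵥ u))) • vecMulVec (A⁻¹ *ᵥ u) (v ᵥ* A⁻¹) := by
  have hdet := (isUnit_iff_isUnit_det A).1 hA
  refine inv_eq_right_inv ?_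
  rw [mul_sub, add_mul, mul_nonsing_inv _ hdet, mul_smul_comm, add_mul, smul_mul_assoc,
    vecMulVec_mul, mul_vecMulVec, mulVec_mulVec, mul_nonsing_inv _ hdet, one_mulVec,
    smul_mul_assoc, vecMulVec_mul_vecMulVec]
  set q := v ⬝ᵥ A⁻¹ *ᵥ u
  have hcoeff : s = s / (1 + s * q) + s / (1 + s * q) * (s * q) := by field_simp
  simp only [vecMulVec_smul, smul_smul, smul_add, ← add_smul, ← hcoeff,
    add_sub_cancel_right]

end Inverse

section RankOneDowndate

theorem pow_sub_pow_eq_sum_mul_sub_mul {R : Type*} [Ring R] (a b : R) (k : ℕ) :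
    a ^ k - b ^ k = ∑ j ∈ Finset.range k, b ^ j * (a - b) * a ^ (k - 1 - j) := by
  have hterm (j : ℕ) (hj : j ∈ Finset.range k) :
      b ^ j * (a - b) * a ^ (k - 1 - j) =
        b ^ j * a ^ (k - j) - b ^ (j + 1) * a ^ (k - (j + 1)) := by
    have hj' := Finset.mem_range.1 hj
    rw [mul_sub, sub_mul, mul_assoc, ← pow_succ', ← pow_succ, Nat.sub_sub, Nat.add_comm 1 j,
      show k - (j + 1) + 1 = k - j by lia]
  rw [Finset.sum_congr rfl hterm, Finset.sum_range_sub' fun j => b ^ j * a ^ (k - j)]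
  simp

variable {ι : Type*} [Fintype ι] [DecidableEq ι]

theorem trace_pow_sub_trace_sub_smul_vecMulVec_pow {R : Type*} [CommRing R] {G K : Matrix ι ι R}
    {r : R} {u w : ι → R} (hGK : K = G - r • vecMulVec u w) (k : ℕ) :
    (G ^ k).trace - (K ^ k).trace =
      r * ∑ j ∈ Finset.range k, w ⬝ᵥ (G ^ (k - 1 - j) * K ^ j) *ᵥ u := by
  rw [← trace_sub, pow_sub_pow_eq_sum_mul_sub_mul, trace_sum, Finset.mul_sum]
  refine Finset.sum_congr rfl fun j _ => ?_
  rw [show G - K = r • vecMulVec u w by rw [hGK]; abel, mul_smul_comm, smul_mul_assoc, trace_smul,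
    smul_eq_mul, mul_vecMulVec, vecMulVec_mul, trace_vecMulVec, dotProduct_comm,
    ← dotProduct_mulVec, mulVec_mulVec]

theorem dotProduct_pow_mul_sub_smul_vecMulVec_pow_succ_mulVec {R : Type*} [CommRing R]
    {G K : Matrix ι ι R} {r : R} {w : ι → R} (hGK : K = G - r • vecMulVec w w) (i j : ℕ) :
    w ⬝ᵥ (G ^ i * K ^ (j + 1)) *ᵥ w =
      w ⬝ᵥ (G ^ (i + 1) * K ^ j) *ᵥ w - r * ((w ⬝ᵥ G ^ i *ᵥ w) * (w ⬝ᵥ K ^ j *ᵥ w)) := by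
  have hstep : G ^ i * K ^ (j + 1) =
      G ^ (i + 1) * K ^ j - r • vecMulVec (G ^ i *ᵥ w) (w ᵥ* K ^ j) := by
    rw [← vecMulVec_mul, ← mul_vecMulVec, ← smul_mul_assoc, ← mul_smul_comm, pow_succ G,
      ← sub_mul, ← mul_sub, ← hGK, pow_succ' K, mul_assoc]
  rw [hstep, sub_mulVec, dotProduct_sub, smul_mulVec, dotProduct_smul, vecMulVec_mulVec,
    op_smul_eq_smul, dotProduct_smul, ← dotProduct_mulVec, smul_eq_mul, smul_eq_mul,
    mul_comm (w ⬝ᵥ K ^ j *ᵥ w)]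

theorem mulVec_dotProduct_pow_mulVec_mulVec {R : Type*} [CommRing R] {G : Matrix ι ι R}
    (hG : G.IsSymm) (v : ι → R) (k : ℕ) :
    G *ᵥ v ⬝ᵥ G ^ k *ᵥ G *ᵥ v = v ⬝ᵥ G ^ (k + 2) *ᵥ v := by
  rw [dotProduct_comm, dotProduct_mulVec, ← mulVec_transpose, hG.eq, dotProduct_comm, mulVec_mulVec,
    mulVec_mulVec, ← pow_succ', ← pow_succ]

variable {G K : Matrix ι ι ℝ} {r : ℝ}

theorem dotProduct_pow_mul_pow_mulVec_le {w : ι → ℝ} (hG : G.PosSemidef) (hK : K.PosSemidef)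
    (hr : 0 ≤ r) (hGK : K = G - r • vecMulVec w w) (i j : ℕ) :
    w ⬝ᵥ (G ^ i * K ^ j) *ᵥ w ≤ w ⬝ᵥ G ^ (i + j) *ᵥ w := by
  induction j generalizing i with
  | zero => simp
  | succ j ih =>
    have hGi : 0 ≤ w ⬝ᵥ G ^ i *ᵥ w := by simpa using (hG.pow i).dotProduct_mulVec_nonneg w
    have hKj : 0 ≤ w ⬝ᵥ K ^ j *ᵥ w := by simpa using (hK.pow j).dotProduct_mulVec_nonneg w
    calc w ⬝ᵥ (G ^ i * K ^ (j + 1)) *ᵥ w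
        ≤ w ⬝ᵥ (G ^ (i + 1) * K ^ j) *ᵥ w := by
          rw [dotProduct_pow_mul_sub_smul_vecMulVec_pow_succ_mulVec hGK]
          exact sub_le_self _ (by positivity)
      _ ≤ w ⬝ᵥ G ^ (i + (j + 1)) *ᵥ w := (ih (i + 1)).trans_eq (by rw [add_right_comm, add_assoc])

theorem le_dotProduct_pow_mul_pow_mulVec {v : ι → ℝ} (hG : G.PosSemidef) (hK : K.PosSemidef)
    (hr : 0 ≤ r) (hGK : K = G - r • vecMulVec (G *ᵥ v) (G *ᵥ v)) (i j : ℕ) :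
    (v ⬝ᵥ G ^ (i + j + 2) *ᵥ v) * (1 - j * (r * (v ⬝ᵥ G *ᵥ v))) ≤
      G *ᵥ v ⬝ᵥ (G ^ i * K ^ j) *ᵥ G *ᵥ v := by
  have hsymm := isHermitian_iff_isSymm.1 hG.1
  induction j generalizing i with
  | zero => simp [← mulVec_dotProduct_pow_mulVec_mulVec hsymm, -mulVec_mulVec]
  | succ j ih =>
    have hGi : 0 ≤ v ⬝ᵥ G ^ (i + 2) *ᵥ v := by
      simpa using (hG.pow (i + 2)).dotProduct_mulVec_nonneg v
    have hKj : G *ᵥ v ⬝ᵥ K ^ j *ᵥ G *ᵥ v ≤ v ⬝ᵥ G ^ (j + 2) *ᵥ v := by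
      simpa only [pow_zero, one_mul, zero_add, mulVec_dotProduct_pow_mulVec_mulVec hsymm] using
        dotProduct_pow_mul_pow_mulVec_le hG hK hr hGK 0 j
    have hprod : (v ⬝ᵥ G ^ (i + 2) *ᵥ v) * (G *ᵥ v ⬝ᵥ K ^ j *ᵥ G *ᵥ v) ≤
        (v ⬝ᵥ G *ᵥ v) * (v ⬝ᵥ G ^ (i + (j + 1) + 2) *ᵥ v) :=
      (mul_le_mul_of_nonneg_left hKj hGi).trans <|
        (dotProduct_pow_mulVec_mul_le hG v (i + 1) (j + 1)).trans_eq (by ring_nf)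
    have hnext := ih (i + 1)
    rw [show i + 1 + j = i + (j + 1) by ring] at hnext
    rw [dotProduct_pow_mul_sub_smul_vecMulVec_pow_succ_mulVec hGK,
      mulVec_dotProduct_pow_mulVec_mulVec hsymm]
    push_cast
    linarith [mul_le_mul_of_nonneg_left hprod hr]

theorem trace_pow_sub_le_trace_sub_smul_vecMulVec_pow {v : ι → ℝ} (hG : G.PosSemidef)
    (hK : K.PosSemidef) (hr : 0 ≤ r) (hGK : K = G - r • vecMulVec (G *ᵥ v) (G *ᵥ v)) (m : ℕ) :
    (G ^ (m + 1)).trace - (m + 1) * r * (v ⬝ᵥ G ^ (m + 2) *ᵥ v) ≤ (K ^ (m + 1)).trace := by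
  have hterm : ∀ j ∈ Finset.range (m + 1),
      G *ᵥ v ⬝ᵥ (G ^ (m - j) * K ^ j) *ᵥ G *ᵥ v ≤ v ⬝ᵥ G ^ (m + 2) *ᵥ v := fun j hj => by
    have h := dotProduct_pow_mul_pow_mulVec_le hG hK hr hGK (m - j) j
    rwa [Nat.sub_add_cancel (Finset.mem_range_succ_iff.1 hj),
      mulVec_dotProduct_pow_mulVec_mulVec (isHermitian_iff_isSymm.1 hG.1)] at h
  have hsum := mul_le_mul_of_nonneg_left (Finset.sum_le_card_nsmul _ _ _ hterm) hr
  have htele := trace_pow_sub_trace_sub_smul_vecMulVec_pow hGK (m + 1)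
  simp only [Finset.card_range, nsmul_eq_mul, Nat.cast_add, Nat.cast_one,
    Nat.add_sub_cancel] at hsum htele
  linarith

theorem trace_sub_smul_vecMulVec_pow_le {v : ι → ℝ} (hG : G.PosSemidef) (hK : K.PosSemidef)
    (hr : 0 ≤ r) (hGK : K = G - r • vecMulVec (G *ᵥ v) (G *ᵥ v)) (m : ℕ) :
    (K ^ (m + 1)).trace ≤ (G ^ (m + 1)).trace -
      (m + 1) * r * ((v ⬝ᵥ G ^ (m + 2) *ᵥ v) * (1 - m * (r * (v ⬝ᵥ G *ᵥ v)))) := by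
  have hq : 0 ≤ v ⬝ᵥ G *ᵥ v := by simpa using hG.dotProduct_mulVec_nonneg v
  have ha : 0 ≤ v ⬝ᵥ G ^ (m + 2) *ᵥ v := by
    simpa using (hG.pow (m + 2)).dotProduct_mulVec_nonneg v
  have hterm : ∀ j ∈ Finset.range (m + 1),
      (v ⬝ᵥ G ^ (m + 2) *ᵥ v) * (1 - m * (r * (v ⬝ᵥ G *ᵥ v))) ≤
        G *ᵥ v ⬝ᵥ (G ^ (m - j) * K ^ j) *ᵥ G *ᵥ v := fun j hj => by
    have hjm := Finset.mem_range_succ_iff.1 hj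
    have h := le_dotProduct_pow_mul_pow_mulVec hG hK hr hGK (m - j) j
    rw [Nat.sub_add_cancel hjm] at h
    exact le_trans (by gcongr) h
  have hsum := mul_le_mul_of_nonneg_left (Finset.card_nsmul_le_sum _ _ _ hterm) hr
  have htele := trace_pow_sub_trace_sub_smul_vecMulVec_pow hGK (m + 1)
  simp only [Finset.card_range, nsmul_eq_mul, Nat.cast_add, Nat.cast_one,
    Nat.add_sub_cancel] at hsum htele
  linarith

end RankOneDowndate

section BernoulliUpdate

theorem posDef_add_smul_vecMulVec {ι : Type*} [Finite ι] {H : Matrix ι ι ℝ} (hH : H.PosDef)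
    (v : ι → ℝ) {s : ℝ} (hs : 0 ≤ s) : (H + s • vecMulVec v v).PosDef :=
  hH.add_posSemidef (.smul (by simpa using posSemidef_vecMulVec_self_star v) hs)

theorem one_sub_le_mul_one_div_add_mul {p q η : ℝ} {m : ℕ} (hp : 0 < p) (hq : 0 ≤ q)
    (hm : (m + 1) * q ≤ η * p) :
    1 - η ≤ p * (1 / (p + q) * (1 - m * (1 / (p + q) * q))) := by
  have hη0 : 0 ≤ η := nonneg_of_mul_nonneg_left (le_trans (by positivity) hm) hp
  have hrw : p * (1 / (p + q) * (1 - m * (1 / (p + q) * q))) =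
      p * (p + q - m * q) / (p + q) ^ 2 := by field_simp
  rw [hrw, le_div_iff₀ (by positivity)]
  nlinarith [mul_nonneg hη0 (sq_nonneg q), mul_nonneg hη0 (mul_nonneg hp.le hq),
    mul_le_mul_of_nonneg_left hm hp.le, mul_le_mul_of_nonneg_left hm hq,
    mul_nonneg (Nat.cast_nonneg (α := ℝ) m) (sq_nonneg q), mul_nonneg hp.le hq]

variable {ι : Type*} [Fintype ι] [DecidableEq ι]

theorem inv_add_smul_vecMulVec_self {H : Matrix ι ι ℝ} (hH : H.PosDef) (v : ι → ℝ) {s : ℝ}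
    (hs : 0 ≤ s) :
    (H + s • vecMulVec v v)⁻¹ =
      H⁻¹ - (s / (1 + s * (v ⬝ᵥ H⁻¹ *ᵥ v))) • vecMulVec (H⁻¹ *ᵥ v) (H⁻¹ *ᵥ v) := by
  have hq : 0 ≤ v ⬝ᵥ H⁻¹ *ᵥ v := by simpa using hH.inv.posSemidef.dotProduct_mulVec_nonneg v
  rw [inv_add_smul_vecMulVec hH.isUnit v v (by positivity), ← mulVec_transpose,
    isHermitian_iff_isSymm.1 hH.inv.1]

/-- Both sides agree to first order in the update, up to a gap of `η` in the coefficient of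
`v ⬝ᵥ H⁻¹ ^ (m + 2) *ᵥ v`; that gap absorbs the higher-order terms on the left. -/
theorem bernoulli_trace_inv_pow_le {H : Matrix ι ι ℝ} (hH : H.PosDef)
    (hle : ∀ z : ι → ℝ, z ⬝ᵥ z ≤ z ⬝ᵥ H *ᵥ z) {v : ι → ℝ} {p η : ℝ} (hp : 0 < p) (hη : η ≤ 1)
    {m : ℕ} (hv : (m + 1) * (v ⬝ᵥ v) ≤ η * p) :
    (1 - p) * (H⁻¹ ^ (m + 1)).trace + p * ((H + p⁻¹ • vecMulVec v v)⁻¹ ^ (m + 1)).trace ≤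
      ((H + (1 - η) • vecMulVec v v)⁻¹ ^ (m + 1)).trace := by
  have hs : 0 ≤ 1 - η := sub_nonneg.2 hη
  have hp' : 0 ≤ p⁻¹ := inv_nonneg.2 hp.le
  have hG := hH.inv.posSemidef
  set q := v ⬝ᵥ H⁻¹ *ᵥ v
  set a := v ⬝ᵥ H⁻¹ ^ (m + 2) *ᵥ v
  set r₁ := p⁻¹ / (1 + p⁻¹ * q) with hr₁_def
  set r₂ := (1 - η) / (1 + (1 - η) * q)
  have hq : 0 ≤ q := by simpa using hG.dotProduct_mulVec_nonneg v
  have ha : 0 ≤ a := by simpa only [star_trivial] using (hG.pow (m + 2)).dotProduct_mulVec_nonneg v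
  have hqv : q ≤ v ⬝ᵥ v := by
    simpa using dotProduct_inv_mulVec_le hH.isUnit one_pos (by simpa using hle) v
  have hr₁ : r₁ = 1 / (p + q) := by rw [hr₁_def]; field_simp
  have hr : r₂ ≤ p * (r₁ * (1 - m * (r₁ * q))) := by
    rw [hr₁]
    exact (div_le_self hs (by nlinarith)).trans
      (one_sub_le_mul_one_div_add_mul hp hq (le_trans (by gcongr) hv))
  have hupper := trace_sub_smul_vecMulVec_pow_le hG
    (posDef_add_smul_vecMulVec hH v hp').inv.posSemidef (by positivity)
    (inv_add_smul_vecMulVec_self hH v hp') m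
  have hlower := trace_pow_sub_le_trace_sub_smul_vecMulVec_pow hG
    (posDef_add_smul_vecMulVec hH v hs).inv.posSemidef (by positivity)
    (inv_add_smul_vecMulVec_self hH v hs) m
  calc (1 - p) * (H⁻¹ ^ (m + 1)).trace + p * ((H + p⁻¹ • vecMulVec v v)⁻¹ ^ (m + 1)).trace
      ≤ (1 - p) * (H⁻¹ ^ (m + 1)).trace +
          p * ((H⁻¹ ^ (m + 1)).trace - (m + 1) * r₁ * (a * (1 - m * (r₁ * q)))) := by gcongr
    _ = (H⁻¹ ^ (m + 1)).trace - (m + 1) * a * (p * (r₁ * (1 - m * (r₁ * q)))) := by ring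
    _ ≤ (H⁻¹ ^ (m + 1)).trace - (m + 1) * a * r₂ := by gcongr
    _ = (H⁻¹ ^ (m + 1)).trace - (m + 1) * r₂ * a := by ring
    _ ≤ ((H + (1 - η) • vecMulVec v v)⁻¹ ^ (m + 1)).trace := hlower

end BernoulliUpdate

section BernoulliSampling

variable {n : ℕ}

/-- Expectation of `f` under the product of Bernoulli laws with success probabilities `p i`. -/
noncomputable def bernExpect (p : Fin n → ℝ) (f : (Fin n → Bool) → ℝ) : ℝ :=
  ∑ e, bernWeight p e * f e

/-- Probability of the event `P` under the product of Bernoulli laws with success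
probabilities `p i`. -/
noncomputable def bernProb (p : Fin n → ℝ) (P : (Fin n → Bool) → Prop) : ℝ :=
  ∑ e, if P e then bernWeight p e else 0

/-- Importance weights of the rows kept by the outcome `e`: a kept row is reweighted by `(p i)⁻¹`,
so that every weight has mean `1` as soon as `p i ≠ 0`. -/
noncomputable def sampleWeight (p : Fin n → ℝ) (e : Fin n → Bool) (i : Fin n) : ℝ :=
  if e i then (p i)⁻¹ else 0

theorem bernWeight_nonneg {p : Fin n → ℝ} (hp : ∀ i, p i ∈ Set.Icc 0 1) (e : Fin n → Bool) :
    0 ≤ bernWeight p e :=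
  Finset.prod_nonneg fun i _ => by
    split_ifs
    exacts [(hp i).1, sub_nonneg.2 (hp i).2]

theorem sampleWeight_nonneg {p : Fin n → ℝ} (hp : ∀ i, p i ∈ Set.Icc 0 1) (e : Fin n → Bool)
    (i : Fin n) : 0 ≤ sampleWeight p e i := by
  unfold sampleWeight
  split_ifs
  exacts [inv_nonneg.2 (hp i).1, le_rfl]

theorem bernExpect_succ (p : Fin (n + 1) → ℝ) (f : (Fin (n + 1) → Bool) → ℝ) :
    bernExpect p f = (1 - p 0) * bernExpect (Fin.tail p) (fun e => f (Fin.cons false e)) +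
      p 0 * bernExpect (Fin.tail p) (fun e => f (Fin.cons true e)) := by
  simp only [bernExpect]
  rw [← (Fin.consEquiv fun _ : Fin (n + 1) => Bool).sum_comp, Fintype.sum_prod_type,
    Fintype.sum_bool, add_comm, Finset.mul_sum, Finset.mul_sum]
  simp [bernWeight, Fin.prod_univ_succ, Fin.tail, mul_assoc, Fin.consEquiv]

theorem sum_bernWeight (p : Fin n → ℝ) : ∑ e, bernWeight p e = 1 := by
  induction n with
  | zero => simp [bernWeight]
  | succ n ih => simpa [bernExpect, ih] using bernExpect_succ p fun _ => 1

theorem bernProb_mono {p : Fin n → ℝ} (hp : ∀ i, p i ∈ Set.Icc 0 1)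
    {P Q : (Fin n → Bool) → Prop} (h : ∀ e, P e → Q e) : bernProb p P ≤ bernProb p Q := by
  refine Finset.sum_le_sum fun e _ => ?_
  have hw := bernWeight_nonneg hp e
  have he := h e
  split_ifs <;> tauto

theorem one_sub_bernProb_add_le {p : Fin n → ℝ} (hp : ∀ i, p i ∈ Set.Icc 0 1)
    {P Q R : (Fin n → Bool) → Prop} (h : ∀ e, ¬P e → ¬Q e → R e) :
    1 - (bernProb p P + bernProb p Q) ≤ bernProb p R := by
  rw [← sum_bernWeight p, sub_le_iff_le_add]
  simp only [bernProb, ← Finset.sum_add_distrib]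
  refine Finset.sum_le_sum fun e _ => ?_
  have hw := bernWeight_nonneg hp e
  have he := h e
  split_ifs <;> first | linarith | tauto

theorem mul_bernProb_le_bernExpect {p : Fin n → ℝ} (hp : ∀ i, p i ∈ Set.Icc 0 1)
    {P : (Fin n → Bool) → Prop} {f : (Fin n → Bool) → ℝ} (hf : ∀ e, 0 ≤ f e) {K : ℝ}
    (h : ∀ e, P e → K ≤ f e) : K * bernProb p P ≤ bernExpect p f := by
  rw [bernProb, bernExpect, Finset.mul_sum]
  refine Finset.sum_le_sum fun e _ => ?_
  have hw := bernWeight_nonneg hp e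
  split_ifs with hP
  · rw [mul_comm]
    exact mul_le_mul_of_nonneg_left (h e hP) hw
  · rw [mul_zero]
    exact mul_nonneg hw (hf e)

theorem sampleWeight_cons (p : Fin (n + 1) → ℝ) (b : Bool) (e : Fin n → Bool) :
    sampleWeight p (Fin.cons b e) =
      Fin.cons (if b then (p 0)⁻¹ else 0) (sampleWeight (Fin.tail p) e) := by
  funext i
  cases i using Fin.cases <;> simp [sampleWeight, Fin.tail]

theorem bernExpect_le_of_update_le {p s : Fin n → ℝ} {φ : (Fin n → ℝ) → ℝ}
    (hp : ∀ i, p i ∈ Set.Icc 0 1) (hs : ∀ i, 0 ≤ s i)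
    (h : ∀ t i, (∀ j, 0 ≤ t j) → (1 - p i) * φ (Function.update t i 0) +
      p i * φ (Function.update t i (p i)⁻¹) ≤ φ (Function.update t i (s i))) :
    bernExpect p (fun e => φ (sampleWeight p e)) ≤ φ s := by
  induction n with
  | zero => simp [bernExpect, bernWeight, Subsingleton.elim _ s]
  | succ n ih =>
    have htail (x : ℝ) (hx : 0 ≤ x) :
        bernExpect (Fin.tail p) (fun e => φ (Fin.cons x (sampleWeight (Fin.tail p) e))) ≤
          φ (Fin.cons x (Fin.tail s)) := by
      refine ih (φ := fun t => φ (Fin.cons x t)) (fun i => hp _) (fun i => hs _) fun t i ht => ?_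
      simpa only [Fin.cons_update, Fin.tail] using h (Fin.cons x t) i.succ (Fin.cases hx ht)
    have hhead := h s 0 hs
    have hupdate (x : ℝ) : Function.update s 0 x = Fin.cons x (Fin.tail s) := by
      conv_lhs => rw [← Fin.cons_self_tail s, Fin.update_cons_zero]
    rw [Function.update_eq_self, hupdate, hupdate] at hhead
    rw [bernExpect_succ]
    simp only [sampleWeight_cons, Bool.false_eq_true, if_true, if_false]
    exact hhead.trans' (add_le_add
      (mul_le_mul_of_nonneg_left (htail 0 le_rfl) (sub_nonneg.2 (hp 0).2))
      (mul_le_mul_of_nonneg_left (htail _ (inv_nonneg.2 (hp 0).1)) (hp 0).1))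

theorem bernExpect_norm_add_sum_smul_sq {E : Type*} [NormedAddCommGroup E] [InnerProductSpace ℝ E]
    {p : Fin n → ℝ} {x : Fin n → E} (hx : ∀ i, p i = 0 → x i = 0) (a : E) :
    bernExpect p (fun e => ‖a + ∑ i, sampleWeight p e i • x i‖ ^ 2) =
      ‖a + ∑ i, x i‖ ^ 2 + ∑ i, ((p i)⁻¹ - 1) * ‖x i‖ ^ 2 := by
  induction n generalizing a with
  | zero => simp [bernExpect, bernWeight]
  | succ n ih =>
    have hstep (b : E) : (1 - p 0) * ‖b‖ ^ 2 + p 0 * ‖b + (p 0)⁻¹ • x 0‖ ^ 2 =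
        ‖b + x 0‖ ^ 2 + ((p 0)⁻¹ - 1) * ‖x 0‖ ^ 2 := by
      by_cases h0 : p 0 = 0
      · simp [h0, hx 0 h0]
      · simp only [norm_add_sq_real, inner_smul_right, norm_smul, Real.norm_eq_abs, mul_pow, sq_abs]
        field_simp
        ring
    have htail := ih (p := Fin.tail p) (x := fun i => x i.succ) fun i => hx i.succ
    rw [bernExpect_succ]
    simp only [sampleWeight_cons, Fin.sum_univ_succ, Fin.cons_zero, Fin.cons_succ,
      Bool.false_eq_true, if_true, if_false, zero_smul, zero_add, ← add_assoc, htail]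
    rw [add_right_comm a (x 0), add_right_comm a ((p 0)⁻¹ • x 0), ← hstep]
    simp only [Fin.tail]
    ring

end BernoulliSampling

section SampledGram

variable {ι κ : Type*} [Fintype ι] [DecidableEq κ]

/-- The Gram matrix of the rows of `U` with weights `t`, regularized by the identity so that it
stays invertible when too few rows carry a positive weight. -/
noncomputable def regGram (U : Matrix ι κ ℝ) (t : ι → ℝ) : Matrix κ κ ℝ :=
  1 + ∑ i, t i • vecMulVec (U i) (U i)

theorem regGram_update [DecidableEq ι] (U : Matrix ι κ ℝ) (t : ι → ℝ) (i : ι) (x : ℝ) :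
    regGram U (Function.update t i x) =
      regGram U (Function.update t i 0) + x • vecMulVec (U i) (U i) := by
  have hsplit : Function.update t i x = Function.update t i 0 + Pi.single i x := by
    funext j
    by_cases hj : j = i
    · subst hj; simp
    · simp [hj]
  rw [hsplit]
  simp only [regGram, Pi.add_apply, add_smul, Finset.sum_add_distrib, Pi.single_apply, ite_smul,
    zero_smul, Finset.sum_ite_eq', Finset.mem_univ, if_true, add_assoc]

theorem posDef_regGram [Finite κ] (U : Matrix ι κ ℝ) {t : ι → ℝ} (ht : ∀ i, 0 ≤ t i) :
    (regGram U t).PosDef :=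
  PosDef.one.add_posSemidef <| posSemidef_sum _ fun i _ =>
    .smul (by simpa using posSemidef_vecMulVec_self_star (U i)) (ht i)

variable [Fintype κ]

theorem dotProduct_regGram_mulVec (U : Matrix ι κ ℝ) (t : ι → ℝ) (z : κ → ℝ) :
    z ⬝ᵥ regGram U t *ᵥ z = z ⬝ᵥ z + ∑ i, t i * (U *ᵥ z) i ^ 2 := by
  rw [regGram, add_mulVec, one_mulVec, dotProduct_add, sum_mulVec, dotProduct_sum]
  congr 1
  refine Finset.sum_congr rfl fun i _ => ?_
  rw [smul_mulVec, vecMulVec_mulVec, dotProduct_smul, op_smul_eq_smul, dotProduct_smul,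
    dotProduct_comm z, smul_eq_mul, smul_eq_mul, sq]
  rfl

theorem dotProduct_self_le_dotProduct_regGram_mulVec (U : Matrix ι κ ℝ) {t : ι → ℝ}
    (ht : ∀ i, 0 ≤ t i) (z : κ → ℝ) : z ⬝ᵥ z ≤ z ⬝ᵥ regGram U t *ᵥ z := by
  rw [dotProduct_regGram_mulVec]
  exact le_add_of_nonneg_right (Finset.sum_nonneg fun i _ => mul_nonneg (ht i) (sq_nonneg _))

theorem dotProduct_mulVec_self_of_transpose_mul_self {U : Matrix ι κ ℝ} (hU : Uᵀ * U = 1)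
    (z : κ → ℝ) : U *ᵥ z ⬝ᵥ U *ᵥ z = z ⬝ᵥ z := by
  rw [dotProduct_mulVec, ← mulVec_transpose, mulVec_mulVec, hU, one_mulVec]

theorem trace_inv_regGram_pow_le {U : Matrix ι κ ℝ} (hU : Uᵀ * U = 1) {t : ι → ℝ} {s : ℝ}
    (hs : 0 ≤ s) (ht : ∀ i, s ≤ t i) (k : ℕ) :
    ((regGram U t)⁻¹ ^ k).trace ≤ Fintype.card κ * (1 + s)⁻¹ ^ k := by
  have hpos := posDef_regGram U fun i => hs.trans (ht i)
  refine trace_pow_le_of_dotProduct_mulVec_le hpos.inv.posSemidef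
    (dotProduct_inv_mulVec_le hpos.isUnit (by positivity) fun z => ?_) k
  have hsum : s * (U *ᵥ z ⬝ᵥ U *ᵥ z) ≤ ∑ i, t i * (U *ᵥ z) i ^ 2 := by
    simp only [dotProduct, Finset.mul_sum, ← sq]
    exact Finset.sum_le_sum fun i _ => mul_le_mul_of_nonneg_right (ht i) (sq_nonneg _)
  rw [dotProduct_mulVec_self_of_transpose_mul_self hU] at hsum
  rw [dotProduct_regGram_mulVec]
  linarith

theorem bernoulli_trace_inv_regGram_pow_le [DecidableEq ι] {U : Matrix ι κ ℝ} {t : ι → ℝ}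
    (ht : ∀ j, 0 ≤ t j) {i : ι} {p η : ℝ} (hp : p ∈ Set.Icc 0 1) (hη : η ≤ 1) {m : ℕ}
    (h : p < 1 → (m + 1) * (U i ⬝ᵥ U i) ≤ η * p) :
    (1 - p) * ((regGram U (Function.update t i 0))⁻¹ ^ (m + 1)).trace +
        p * ((regGram U (Function.update t i p⁻¹))⁻¹ ^ (m + 1)).trace ≤
      ((regGram U (Function.update t i (if p < 1 then 1 - η else 1)))⁻¹ ^ (m + 1)).trace := by
  by_cases h1 : p < 1
  · have hUi := h h1
    rw [if_pos h1, regGram_update U t i p⁻¹, regGram_update U t i (1 - η)]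
    rcases hp.1.eq_or_lt with rfl | h0
    · have hUi0 : U i = 0 := dotProduct_self_eq_zero.1 <| le_antisymm
        (nonpos_of_mul_nonpos_right (hUi.trans_eq (mul_zero η)) (by positivity))
        (real_dotProduct_self_nonneg (U i))
      simp [hUi0]
    · have ht0 : ∀ j, 0 ≤ Function.update t i 0 j := fun j => by
        by_cases hj : j = i
        · subst hj; simp
        · simpa [hj] using ht j
      exact bernoulli_trace_inv_pow_le (posDef_regGram U ht0)
        (dotProduct_self_le_dotProduct_regGram_mulVec U ht0) h0 hη hUi
  · simp [le_antisymm hp.2 (not_lt.1 h1)]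

variable {n : ℕ} {U : Matrix (Fin n) κ ℝ} {p : Fin n → ℝ}

theorem bernExpect_trace_inv_regGram_pow_le (hU : Uᵀ * U = 1) (hp : ∀ i, p i ∈ Set.Icc 0 1)
    {η : ℝ} (hη0 : 0 ≤ η) (hη1 : η ≤ 1) {m : ℕ}
    (h : ∀ i, p i < 1 → (m + 1) * (U i ⬝ᵥ U i) ≤ η * p i) :
    bernExpect p (fun e => ((regGram U (sampleWeight p e))⁻¹ ^ (m + 1)).trace) ≤
      Fintype.card κ * (2 - η)⁻¹ ^ (m + 1) := by
  set s : Fin n → ℝ := fun i => if p i < 1 then 1 - η else 1 with hs_def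
  have hs (i : Fin n) : 1 - η ≤ s i := by simp only [hs_def]; split_ifs <;> linarith
  have hη : 0 ≤ 1 - η := sub_nonneg.2 hη1
  calc bernExpect p (fun e => ((regGram U (sampleWeight p e))⁻¹ ^ (m + 1)).trace)
      ≤ ((regGram U s)⁻¹ ^ (m + 1)).trace :=
        bernExpect_le_of_update_le (φ := fun t => ((regGram U t)⁻¹ ^ (m + 1)).trace) hp
          (fun i => hη.trans (hs i))
          fun t i ht => bernoulli_trace_inv_regGram_pow_le ht (hp i) hη1 (h i)
    _ ≤ Fintype.card κ * (1 + (1 - η))⁻¹ ^ (m + 1) := trace_inv_regGram_pow_le hU hη hs _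
    _ = Fintype.card κ * (2 - η)⁻¹ ^ (m + 1) := by rw [← add_sub_assoc, one_add_one_eq_two]

theorem bernProb_exists_sum_sampleWeight_mul_sq_lt_le (hU : Uᵀ * U = 1)
    (hp : ∀ i, p i ∈ Set.Icc 0 1) {η δ : ℝ} (hη0 : 0 ≤ η) (hη1 : η ≤ 1) (hδ : δ < 2) {m : ℕ}
    (h : ∀ i, p i < 1 → (m + 1) * (U i ⬝ᵥ U i) ≤ η * p i) :
    bernProb p (fun e => ∃ z : κ → ℝ,
        ∑ i, sampleWeight p e i * (U *ᵥ z) i ^ 2 < (1 - δ) * (z ⬝ᵥ z)) ≤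
      Fintype.card κ * ((2 - δ) / (2 - η)) ^ (m + 1) := by
  have hδ' : 0 < 2 - δ := sub_pos.2 hδ
  have hpos (e : Fin n → Bool) : (regGram U (sampleWeight p e)).PosDef :=
    posDef_regGram U (sampleWeight_nonneg hp e)
  have hmarkov := (mul_bernProb_le_bernExpect hp (K := (2 - δ)⁻¹ ^ (m + 1))
    (P := fun e => ∃ z : κ → ℝ,
      ∑ i, sampleWeight p e i * (U *ᵥ z) i ^ 2 < (1 - δ) * (z ⬝ᵥ z))
    (fun e => ((hpos e).inv.posSemidef.pow (m + 1)).trace_nonneg) fun e ⟨z, hz⟩ => by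
      by_contra! htr
      have hquad := dotProduct_self_le_of_dotProduct_inv_mulVec_le (hpos e) (inv_pos.2 hδ') <|
        dotProduct_mulVec_le_of_trace_pow_le (hpos e).inv.posSemidef (inv_pos.2 hδ').le
          m.succ_ne_zero htr.le z
      rw [dotProduct_regGram_mulVec, inv_mul_eq_div, le_div_iff₀ hδ'] at hquad
      linarith).trans (bernExpect_trace_inv_regGram_pow_le hU hp hη0 hη1 h)
  rw [inv_pow, inv_mul_eq_div, div_le_iff₀ (by positivity)] at hmarkov
  rwa [div_pow, div_eq_mul_inv, ← inv_pow, mul_comm ((2 - δ) ^ (m + 1)), ← mul_assoc]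

end SampledGram

section SampledResidual

theorem norm_toLp_sq_eq_dotProduct {ι : Type*} [Fintype ι] (v : ι → ℝ) :
    ‖WithLp.toLp 2 v‖ ^ 2 = v ⬝ᵥ v := by
  rw [EuclideanSpace.real_norm_sq_eq]
  simp only [dotProduct, sq]

variable {κ : Type*} [Fintype κ] {n : ℕ} {U : Matrix (Fin n) κ ℝ} {p r : Fin n → ℝ} {θ : ℝ}

theorem bernExpect_dotProduct_transpose_mulVec_le (hp : ∀ i, p i ∈ Set.Icc 0 1) (hθ : 0 ≤ θ)
    (h : ∀ i, p i < 1 → U i ⬝ᵥ U i ≤ θ * p i) (hr : Uᵀ *ᵥ r = 0) :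
    bernExpect p (fun e => Uᵀ *ᵥ (sampleWeight p e * r) ⬝ᵥ Uᵀ *ᵥ (sampleWeight p e * r)) ≤
      θ * (r ⬝ᵥ r) := by
  set x : Fin n → EuclideanSpace ℝ κ := fun i => WithLp.toLp 2 (r i • U i) with hx_def
  have hsum (t : Fin n → ℝ) : ∑ i, t i • x i = WithLp.toLp 2 (Uᵀ *ᵥ (t * r)) := by
    ext j
    simp [hx_def, mulVec, dotProduct, mul_comm, mul_left_comm]
  have hx (i : Fin n) : ‖x i‖ ^ 2 = r i ^ 2 * (U i ⬝ᵥ U i) := by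
    rw [hx_def, norm_toLp_sq_eq_dotProduct, smul_dotProduct, dotProduct_smul, smul_eq_mul,
      smul_eq_mul, ← mul_assoc, ← sq]
  have hx0 (i : Fin n) (hi : p i = 0) : x i = 0 := by
    have hUi := h i (by rw [hi]; exact one_pos)
    rw [hi, mul_zero] at hUi
    exact norm_eq_zero.1 (pow_eq_zero_iff two_ne_zero |>.1
      (le_antisymm (by rw [hx]; exact mul_nonpos_of_nonneg_of_nonpos (sq_nonneg _) hUi)
        (sq_nonneg _)))
  have hmoment := bernExpect_norm_add_sum_smul_sq hx0 0
  have hmean : ∑ i, x i = 0 := by simpa [hr] using hsum 1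
  simp only [zero_add, hsum, hmean, hx, norm_toLp_sq_eq_dotProduct, norm_zero, ne_eq,
    OfNat.ofNat_ne_zero, not_false_eq_true, zero_pow] at hmoment
  rw [hmoment, dotProduct, Finset.mul_sum]
  refine Finset.sum_le_sum fun i _ => ?_
  have hterm : ((p i)⁻¹ - 1) * (U i ⬝ᵥ U i) ≤ θ := by
    rcases (hp i).2.eq_or_lt with h1 | h1
    · simpa [h1] using hθ
    have hUi := h i h1
    have hpi : 0 ≤ (p i)⁻¹ := inv_nonneg.2 (hp i).1
    calc ((p i)⁻¹ - 1) * (U i ⬝ᵥ U i) ≤ (p i)⁻¹ * (U i ⬝ᵥ U i) := by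
          linarith [real_dotProduct_self_nonneg (U i)]
      _ ≤ (p i)⁻¹ * (θ * p i) := by gcongr
      _ = θ * ((p i)⁻¹ * p i) := by ring
      _ ≤ θ := mul_le_of_le_one_right hθ inv_mul_le_one
  calc ((p i)⁻¹ - 1) * (r i ^ 2 * (U i ⬝ᵥ U i))
      = r i ^ 2 * (((p i)⁻¹ - 1) * (U i ⬝ᵥ U i)) := by ring
    _ ≤ r i ^ 2 * θ := by gcongr
    _ = θ * (r i * r i) := by ring

theorem bernProb_lt_dotProduct_transpose_mulVec_le (hp : ∀ i, p i ∈ Set.Icc 0 1) (hθ : 0 ≤ θ)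
    (h : ∀ i, p i < 1 → U i ⬝ᵥ U i ≤ θ * p i) (hr : Uᵀ *ᵥ r = 0) {τ : ℝ} (hτ : 0 < τ) :
    bernProb p (fun e => τ * (r ⬝ᵥ r) <
      Uᵀ *ᵥ (sampleWeight p e * r) ⬝ᵥ Uᵀ *ᵥ (sampleWeight p e * r)) ≤ θ / τ := by
  rcases (real_dotProduct_self_nonneg r).eq_or_lt with h0 | h0
  · simpa [dotProduct_self_eq_zero.1 h0.symm, bernProb] using div_nonneg hθ hτ.le
  · have hmarkov := (mul_bernProb_le_bernExpect hp (K := τ * (r ⬝ᵥ r))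
      (fun e => real_dotProduct_self_nonneg (Uᵀ *ᵥ (sampleWeight p e * r)))
      fun e he => le_of_lt he).trans (bernExpect_dotProduct_transpose_mulVec_le hp hθ h hr)
    rw [le_div_iff₀ hτ]
    nlinarith

end SampledResidual

section SingularValues

variable {n d : ℕ}

theorem vnorm_eq_norm_toLp (v : Fin n → ℝ) : vnorm v = ‖WithLp.toLp 2 v‖ := by
  simp [vnorm, EuclideanSpace.norm_eq]

theorem vnorm_sq (v : Fin n → ℝ) : vnorm v ^ 2 = v ⬝ᵥ v := by
  rw [vnorm_eq_norm_toLp, norm_toLp_sq_eq_dotProduct]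

theorem vnorm_nonneg (v : Fin n → ℝ) : 0 ≤ vnorm v := Real.sqrt_nonneg _

theorem vnorm_eq_zero_iff {v : Fin n → ℝ} : vnorm v = 0 ↔ v = 0 := by
  rw [vnorm_eq_norm_toLp, norm_eq_zero, WithLp.toLp_eq_zero]

theorem vnorm_smul (a : ℝ) (v : Fin n → ℝ) : vnorm (a • v) = |a| * vnorm v := by
  rw [vnorm_eq_norm_toLp, vnorm_eq_norm_toLp, WithLp.toLp_smul, norm_smul, Real.norm_eq_abs]

theorem vnorm_sub_rev (v w : Fin n → ℝ) : vnorm (v - w) = vnorm (w - v) := by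
  rw [vnorm_eq_norm_toLp, vnorm_eq_norm_toLp, WithLp.toLp_sub, WithLp.toLp_sub, norm_sub_rev]

theorem vnorm_add_sq_of_dotProduct_eq_zero {v w : Fin n → ℝ} (h : v ⬝ᵥ w = 0) :
    vnorm (v + w) ^ 2 = vnorm v ^ 2 + vnorm w ^ 2 := by
  simp only [vnorm_sq, add_dotProduct, dotProduct_add, dotProduct_comm w v, h, zero_add, add_zero]

theorem vnorm_mulVec_le_sqrt_sum_sq_mul (A : Matrix (Fin n) (Fin d) ℝ) (z : Fin d → ℝ) :
    vnorm (A *ᵥ z) ≤ √(∑ i, ∑ j, A i j ^ 2) * vnorm z := by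
  rw [vnorm, vnorm, ← Real.sqrt_mul (by positivity), Finset.sum_mul]
  exact Real.sqrt_le_sqrt (Finset.sum_le_sum fun i _ =>
    Finset.sum_mul_sq_le_sq_mul_sq Finset.univ (A i) z)

theorem exists_vnorm_eq_one_and_vnorm_mulVec_eq (X : Matrix (Fin n) (Fin d) ℝ) {z : Fin d → ℝ}
    (hz : z ≠ 0) : ∃ v, vnorm v = 1 ∧ vnorm (X *ᵥ z) / vnorm z = vnorm (X *ᵥ v) := by
  have hpos : 0 < vnorm z := (vnorm_nonneg z).lt_of_ne' (mt vnorm_eq_zero_iff.1 hz)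
  refine ⟨(vnorm z)⁻¹ • z, ?_, ?_⟩
  · rw [vnorm_smul, abs_of_pos (inv_pos.2 hpos), inv_mul_cancel₀ hpos.ne']
  · rw [mulVec_smul, vnorm_smul, abs_of_pos (inv_pos.2 hpos), inv_mul_eq_div]

theorem sigmaMin_mul_vnorm_le (X : Matrix (Fin n) (Fin d) ℝ) (z : Fin d → ℝ) :
    sigmaMin X * vnorm z ≤ vnorm (X *ᵥ z) := by
  by_cases hz : z = 0
  · simp [hz, vnorm]
  rw [← le_div_iff₀ ((vnorm_nonneg z).lt_of_ne' (mt vnorm_eq_zero_iff.1 hz))]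
  refine csInf_le ⟨0, ?_⟩ (exists_vnorm_eq_one_and_vnorm_mulVec_eq X hz)
  rintro r ⟨v, -, rfl⟩
  exact vnorm_nonneg _

theorem vnorm_mulVec_le_sigmaMax_mul (X : Matrix (Fin n) (Fin d) ℝ) (z : Fin d → ℝ) :
    vnorm (X *ᵥ z) ≤ sigmaMax X * vnorm z := by
  by_cases hz : z = 0
  · simp [hz, vnorm]
  rw [← div_le_iff₀ ((vnorm_nonneg z).lt_of_ne' (mt vnorm_eq_zero_iff.1 hz))]
  refine le_csSup ⟨√(∑ i, ∑ j, X i j ^ 2), ?_⟩ (exists_vnorm_eq_one_and_vnorm_mulVec_eq X hz)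
  rintro r ⟨v, hv, rfl⟩
  simpa only [hv, mul_one] using vnorm_mulVec_le_sqrt_sum_sq_mul X v

theorem sigmaMin_pos_of_mul_eq_one (hd : 0 < d) {X : Matrix (Fin n) (Fin d) ℝ}
    {L : Matrix (Fin d) (Fin n) ℝ} (hL : L * X = 1) : 0 < sigmaMin X := by
  set F := √(∑ i, ∑ j, L i j ^ 2)
  have hF (v : Fin d → ℝ) (hv : vnorm v = 1) : 1 ≤ F * vnorm (X *ᵥ v) := by
    have hLXv := vnorm_mulVec_le_sqrt_sum_sq_mul L (X *ᵥ v)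
    rwa [mulVec_mulVec, hL, one_mulVec, hv] at hLXv
  have hunit : vnorm (Pi.single (⟨0, hd⟩ : Fin d) (1 : ℝ)) = 1 := by
    simp [vnorm, Pi.single_apply]
  have hFpos : 0 < F :=
    pos_of_mul_pos_left (one_pos.trans_le (hF _ hunit)) (vnorm_nonneg _)
  refine (inv_pos.2 hFpos).trans_le (le_csInf ⟨_, _, hunit, rfl⟩ ?_)
  rintro r ⟨v, hv, rfl⟩
  exact (inv_le_iff_one_le_mul₀' hFpos).2 (hF v hv)

theorem vnorm_sq_le_div_sigmaMin_sq {X : Matrix (Fin n) (Fin d) ℝ} (hX : 0 < sigmaMin X)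
    (z : Fin d → ℝ) : vnorm z ^ 2 ≤ vnorm (X *ᵥ z) ^ 2 / sigmaMin X ^ 2 := by
  rw [le_div_iff₀ (pow_pos hX 2), mul_comm, ← mul_pow]
  exact pow_le_pow_left₀ (mul_nonneg hX.le (vnorm_nonneg z)) (sigmaMin_mul_vnorm_le X z) 2

end SingularValues

section OrthonormalBasis

variable {ι κ : Type*} [Fintype ι] [Fintype κ] [DecidableEq κ] {X U : Matrix ι κ ℝ}

theorem isUnit_det_transpose_mul_self_of_rank_eq (hX : X.rank = Fintype.card κ) :
    IsUnit (Xᵀ * X).det := by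
  rw [← isUnit_iff_isUnit_det, ← mulVec_surjective_iff_isUnit, ← coe_mulVecLin,
    ← LinearMap.range_eq_top]
  refine Submodule.eq_top_of_finrank_eq ?_
  rw [← rank_transpose_mul_self X, rank] at hX
  simpa only [Module.finrank_fintype_fun_eq_card] using hX

theorem mul_transpose_mul_of_range_le (hU : Uᵀ * U = 1)
    (hXU : LinearMap.range X.mulVecLin ≤ LinearMap.range U.mulVecLin) : U * (Uᵀ * X) = X := by
  refine ext_of_mulVec_single fun j => ?_
  obtain ⟨z, hz⟩ := hXU ⟨Pi.single j 1, rfl⟩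
  simp only [mulVecLin_apply] at hz
  rw [← mulVec_mulVec, ← mulVec_mulVec, ← hz, mulVec_mulVec z, hU, one_mulVec]

theorem mul_inv_transpose_mul_self_mul_transpose_eq (hX : IsUnit (Xᵀ * X).det) (hU : Uᵀ * U = 1)
    (hXU : LinearMap.range X.mulVecLin ≤ LinearMap.range U.mulVecLin) :
    X * (Xᵀ * X)⁻¹ * Xᵀ = U * Uᵀ := by
  obtain ⟨B, hXB⟩ : ∃ B, X = U * B := ⟨_, (mul_transpose_mul_of_range_le hU hXU).symm⟩
  have hgram : Xᵀ * X = Bᵀ * B := by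
    rw [hXB, transpose_mul, Matrix.mul_assoc, ← Matrix.mul_assoc Uᵀ, hU, Matrix.one_mul]
  rw [hgram, det_mul, IsUnit.mul_iff] at hX
  calc X * (Xᵀ * X)⁻¹ * Xᵀ = U * B * (B⁻¹ * Bᵀ⁻¹) * (Bᵀ * Uᵀ) := by
        rw [hgram, Matrix.mul_inv_rev, hXB, transpose_mul]
    _ = U * (B * B⁻¹) * (Bᵀ⁻¹ * Bᵀ) * Uᵀ := by simp only [Matrix.mul_assoc]
    _ = U * Uᵀ := by
        rw [mul_nonsing_inv _ hX.2, nonsing_inv_mul _ hX.1, Matrix.mul_one, Matrix.mul_one]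

end OrthonormalBasis

section LeastSquares

variable {ι κ : Type*} [Fintype ι] [Fintype κ]

/-- Least-squares objective for the response `y` and the design matrix `X`, in which the squared
residual of the row `i` has weight `t i`. -/
def weightedLoss (X : Matrix ι κ ℝ) (y t : ι → ℝ) (β : κ → ℝ) : ℝ :=
  ∑ i, t i * (y i - (X *ᵥ β) i) ^ 2

/-- The least-squares estimator `(XᵀX)⁻¹Xᵀy`, with a junk value if `XᵀX` is singular. -/
noncomputable def leastSquares [DecidableEq κ] (X : Matrix ι κ ℝ) (y : ι → ℝ) : κ → ℝ :=
  ((Xᵀ * X)⁻¹ * Xᵀ) *ᵥ y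

theorem transpose_mulVec_sub_mulVec_leastSquares [DecidableEq κ] {X : Matrix ι κ ℝ}
    (hX : IsUnit (Xᵀ * X).det) (y : ι → ℝ) : Xᵀ *ᵥ (y - X *ᵥ leastSquares X y) = 0 := by
  rw [leastSquares, mulVec_sub, mulVec_mulVec, mulVec_mulVec, ← Matrix.mul_assoc,
    mul_nonsing_inv _ hX, Matrix.one_mul, sub_self]

theorem sq_mul_dotProduct_self_le_of_weightedLoss_le {U : Matrix ι κ ℝ} {t r : ι → ℝ} {a : κ → ℝ}
    {μ : ℝ} (hμ : 0 ≤ μ) (hlow : μ * (a ⬝ᵥ a) ≤ ∑ i, t i * (U *ᵥ a) i ^ 2)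
    (hloss : weightedLoss U r t a ≤ weightedLoss U r t 0) :
    μ ^ 2 * (a ⬝ᵥ a) ≤ 4 * (Uᵀ *ᵥ (t * r) ⬝ᵥ Uᵀ *ᵥ (t * r)) := by
  set N := Uᵀ *ᵥ (t * r) with hN
  have hcross : a ⬝ᵥ N = ∑ i, t i * (r i * (U *ᵥ a) i) := by
    rw [hN, dotProduct_mulVec, vecMul_transpose, dotProduct]
    exact Finset.sum_congr rfl fun i _ => by rw [Pi.mul_apply]; ring
  have hexpand : weightedLoss U r t a =
      weightedLoss U r t 0 - 2 * (a ⬝ᵥ N) + ∑ i, t i * (U *ᵥ a) i ^ 2 := by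
    rw [hcross, weightedLoss, weightedLoss, Finset.mul_sum, ← Finset.sum_sub_distrib,
      ← Finset.sum_add_distrib]
    refine Finset.sum_congr rfl fun i _ => ?_
    rw [mulVec_zero, Pi.zero_apply]
    ring
  have hquad : μ * (a ⬝ᵥ a) ≤ 2 * (a ⬝ᵥ N) := by linarith
  have hsq := real_dotProduct_self_nonneg (μ • a - (2 : ℝ) • N)
  simp only [sub_dotProduct, dotProduct_sub, smul_dotProduct, dotProduct_smul, smul_eq_mul,
    dotProduct_comm N a] at hsq
  linarith [mul_le_mul_of_nonneg_left hquad hμ]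

variable {n d : ℕ} {X U : Matrix (Fin n) (Fin d) ℝ} {y t : Fin n → ℝ} {β βt : Fin d → ℝ} {ε : ℝ}

theorem sq_mul_vnorm_mulVec_sub_sq_le_of_weightedLoss_le (hU : Uᵀ * U = 1)
    (hXU : LinearMap.range X.mulVecLin ≤ LinearMap.range U.mulVecLin) {μ : ℝ} (hμ : 0 ≤ μ)
    (hlow : ∀ a : Fin d → ℝ, μ * (a ⬝ᵥ a) ≤ ∑ i, t i * (U *ᵥ a) i ^ 2)
    (hloss : weightedLoss X y t βt ≤ weightedLoss X y t β) :
    μ ^ 2 * vnorm (X *ᵥ (β - βt)) ^ 2 ≤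
      4 * (Uᵀ *ᵥ (t * (y - X *ᵥ β)) ⬝ᵥ Uᵀ *ᵥ (t * (y - X *ᵥ β))) := by
  obtain ⟨a, ha⟩ := hXU ⟨βt - β, rfl⟩
  simp only [mulVecLin_apply] at ha
  rw [mulVec_sub, vnorm_sub_rev, ← mulVec_sub, vnorm_sq, ← ha,
    dotProduct_mulVec_self_of_transpose_mul_self hU]
  refine sq_mul_dotProduct_self_le_of_weightedLoss_le hμ (hlow a) ?_
  simpa only [weightedLoss, ha, mulVec_sub, mulVec_zero, Pi.sub_apply, Pi.zero_apply, sub_zero,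
    sub_sub, add_sub_cancel] using hloss

theorem dotProduct_mulVec_sub_mulVec_eq_zero (hβ : Xᵀ *ᵥ (y - X *ᵥ β) = 0) (z : Fin d → ℝ) :
    X *ᵥ z ⬝ᵥ (y - X *ᵥ β) = 0 := by
  rw [dotProduct_comm, dotProduct_mulVec, ← mulVec_transpose, hβ, zero_dotProduct]

theorem vnorm_sub_mulVec_sq_le_one_add_mul (hβ : Xᵀ *ᵥ (y - X *ᵥ β) = 0)
    (h : vnorm (X *ᵥ (β - βt)) ^ 2 ≤ ε * vnorm (y - X *ᵥ β) ^ 2) :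
    vnorm (y - X *ᵥ βt) ^ 2 ≤ (1 + ε) * vnorm (y - X *ᵥ β) ^ 2 := by
  have hsplit : y - X *ᵥ βt = X *ᵥ (β - βt) + (y - X *ᵥ β) := by rw [mulVec_sub]; abel
  rw [hsplit, vnorm_add_sq_of_dotProduct_eq_zero (dotProduct_mulVec_sub_mulVec_eq_zero hβ _)]
  linarith

theorem vnorm_sub_sq_le_div_sigmaMin_sq_mul (hX : 0 < sigmaMin X)
    (h : vnorm (X *ᵥ (β - βt)) ^ 2 ≤ ε * vnorm (y - X *ᵥ β) ^ 2) :
    vnorm (β - βt) ^ 2 ≤ ε / sigmaMin X ^ 2 * vnorm (y - X *ᵥ β) ^ 2 := by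
  rw [div_mul_eq_mul_div]
  exact (vnorm_sq_le_div_sigmaMin_sq hX _).trans (by gcongr)

theorem vnorm_sub_mulVec_sq_le_inv_sq_sub_one_mul (hβ : Xᵀ *ᵥ (y - X *ᵥ β) = 0) {γ : ℝ}
    (hγ : 0 < γ) (h : γ * vnorm y ≤ vnorm (X *ᵥ β)) :
    vnorm (y - X *ᵥ β) ^ 2 ≤ (γ⁻¹ ^ 2 - 1) * vnorm (X *ᵥ β) ^ 2 := by
  have hy : vnorm y ^ 2 = vnorm (X *ᵥ β) ^ 2 + vnorm (y - X *ᵥ β) ^ 2 := by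
    rw [← vnorm_add_sq_of_dotProduct_eq_zero (dotProduct_mulVec_sub_mulVec_eq_zero hβ β),
      add_sub_cancel]
  have hle : vnorm y ^ 2 ≤ (γ⁻¹ * vnorm (X *ᵥ β)) ^ 2 :=
    pow_le_pow_left₀ (vnorm_nonneg y) ((le_inv_mul_iff₀ hγ).2 h) 2
  rw [mul_pow] at hle
  linarith

theorem vnorm_sub_sq_le_mul_sigmaMax_div_sigmaMin_sq_mul (hX : 0 < sigmaMin X)
    (hβ : Xᵀ *ᵥ (y - X *ᵥ β) = 0) (hε : 0 ≤ ε)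
    (h : vnorm (X *ᵥ (β - βt)) ^ 2 ≤ ε * vnorm (y - X *ᵥ β) ^ 2) {γ : ℝ} (hγ0 : 0 < γ)
    (hγ1 : γ ≤ 1) (hγ : γ * vnorm y ≤ vnorm (X *ᵥ β)) :
    vnorm (β - βt) ^ 2 ≤
      ε * (sigmaMax X / sigmaMin X) ^ 2 * (γ⁻¹ ^ 2 - 1) * vnorm β ^ 2 := by
  have hγ' : 0 ≤ γ⁻¹ ^ 2 - 1 := sub_nonneg.2 (one_le_pow₀ ((one_le_inv₀ hγ0).2 hγ1))
  calc vnorm (β - βt) ^ 2 ≤ ε / sigmaMin X ^ 2 * vnorm (y - X *ᵥ β) ^ 2 :=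
        vnorm_sub_sq_le_div_sigmaMin_sq_mul hX h
    _ ≤ ε / sigmaMin X ^ 2 * ((γ⁻¹ ^ 2 - 1) * (sigmaMax X * vnorm β) ^ 2) := by
        grw [vnorm_sub_mulVec_sq_le_inv_sq_sub_one_mul hβ hγ0 hγ]
        gcongr
        exacts [vnorm_nonneg _, vnorm_mulVec_le_sigmaMax_mul X β]
    _ = ε * (sigmaMax X / sigmaMin X) ^ 2 * (γ⁻¹ ^ 2 - 1) * vnorm β ^ 2 := by
        rw [div_pow]
        ring

end LeastSquares

section LeverageScores

variable {ι κ : Type*} [Fintype ι] [Fintype κ] [DecidableEq κ]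

/-- The leverage score of the row `i` of `X`: the `i`-th diagonal entry of the orthogonal
projection `X(XᵀX)⁻¹Xᵀ` onto the column space. -/
noncomputable def leverageScore (X : Matrix ι κ ℝ) (i : ι) : ℝ :=
  (X * (Xᵀ * X)⁻¹ * Xᵀ) i i

variable {X U : Matrix ι κ ℝ}

theorem leverageScore_eq_dotProduct_self (hX : IsUnit (Xᵀ * X).det) (hU : Uᵀ * U = 1)
    (hXU : LinearMap.range X.mulVecLin ≤ LinearMap.range U.mulVecLin) (i : ι) :
    leverageScore X i = U i ⬝ᵥ U i := by
  rw [leverageScore, mul_inv_transpose_mul_self_mul_transpose_eq hX hU hXU]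
  rfl

theorem mem_Icc_zero_one_of_leverageScore (hX : IsUnit (Xᵀ * X).det) (hU : Uᵀ * U = 1)
    (hXU : LinearMap.range X.mulVecLin ≤ LinearMap.range U.mulVecLin) {c k : ℝ} (hc : 0 ≤ c)
    (hk : 0 ≤ k) {i : ι} {q : ℝ} (hq : q ∈ Set.Icc (min 1 (c * leverageScore X i / k)) 1) :
    q ∈ Set.Icc 0 1 := by
  refine ⟨(le_min zero_le_one ?_).trans hq.1, hq.2⟩
  rw [leverageScore_eq_dotProduct_self hX hU hXU]
  exact div_nonneg (mul_nonneg hc (real_dotProduct_self_nonneg _)) hk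

theorem dotProduct_self_le_div_mul_of_leverageScore (hX : IsUnit (Xᵀ * X).det) (hU : Uᵀ * U = 1)
    (hXU : LinearMap.range X.mulVecLin ≤ LinearMap.range U.mulVecLin) {c k : ℝ} (hc : 0 < c)
    (hk : 0 < k) {i : ι} {q : ℝ} (hq : min 1 (c * leverageScore X i / k) ≤ q) (hq1 : q < 1) :
    U i ⬝ᵥ U i ≤ k / c * q := by
  have hle := (min_le_iff.1 hq).resolve_left hq1.not_ge
  rw [div_le_iff₀ hk, leverageScore_eq_dotProduct_self hX hU hXU] at hle
  rw [div_mul_eq_mul_div, le_div_iff₀ hc]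
  linarith

theorem mulVec_leastSquares (hX : IsUnit (Xᵀ * X).det) (hU : Uᵀ * U = 1)
    (hXU : LinearMap.range X.mulVecLin ≤ LinearMap.range U.mulVecLin) (y : ι → ℝ) :
    X *ᵥ leastSquares X y = (U * Uᵀ) *ᵥ y := by
  rw [leastSquares, mulVec_mulVec, ← Matrix.mul_assoc,
    mul_inv_transpose_mul_self_mul_transpose_eq hX hU hXU]

theorem transpose_mulVec_sub_mulVec_leastSquares_of_range_le (hX : IsUnit (Xᵀ * X).det)
    (hU : Uᵀ * U = 1) (hXU : LinearMap.range X.mulVecLin ≤ LinearMap.range U.mulVecLin)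
    (y : ι → ℝ) :
    Uᵀ *ᵥ (y - X *ᵥ leastSquares X y) = 0 := by
  rw [mulVec_leastSquares hX hU hXU, mulVec_sub, mulVec_mulVec, ← Matrix.mul_assoc, hU,
    Matrix.one_mul, sub_self]

end LeverageScores

section SamplingProbability

variable {n d : ℕ} {X U : Matrix (Fin n) (Fin d) ℝ} {y p : Fin n → ℝ} {c ε : ℝ}

theorem natCast_mul_six_sevenths_pow_le {m : ℕ} (hd : 0 < d) (hm : 7 * Real.log d + 21 ≤ m) :
    (d : ℝ) * (6 / 7) ^ (m + 1) ≤ 1 / 10 := by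
  have hbase : (6 / 7 : ℝ) ≤ Real.exp (-(1 / 7)) := by
    linarith [Real.add_one_le_exp (-(1 / 7) : ℝ)]
  have hthree : (10 : ℝ) ≤ Real.exp 3 := by
    rw [← Real.exp_one_rpow, Real.rpow_ofNat]
    calc (10 : ℝ) ≤ 2.7182818283 ^ 3 := by norm_num
      _ ≤ Real.exp 1 ^ 3 := by gcongr; exact Real.exp_one_gt_d9.le
  calc (d : ℝ) * (6 / 7) ^ (m + 1) ≤ Real.exp (Real.log d) * Real.exp (-(1 / 7)) ^ (m + 1) := by
        rw [Real.exp_log (by exact_mod_cast hd)]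
        gcongr
    _ = Real.exp (Real.log d - (m + 1) / 7) := by
        rw [← Real.exp_nat_mul, ← Real.exp_add]
        push_cast
        ring_nf
    _ ≤ Real.exp (-3) := Real.exp_le_exp.2 (by linarith)
    _ ≤ 1 / 10 := by
        rw [Real.exp_neg, ← one_div]
        exact one_div_le_one_div_of_le (by norm_num) hthree

theorem exists_nat_mul_six_sevenths_pow_le_and_mul_le (hd : 0 < d)
    (hc : 160 * (d * Real.log d + d) ≤ c) :
    ∃ m : ℕ, (d : ℝ) * (6 / 7) ^ (m + 1) ≤ 1 / 10 ∧ 4 * (m + 1) * (d : ℝ) ≤ c := by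
  have hd' : (1 : ℝ) ≤ d := by exact_mod_cast hd
  have hlog : 0 ≤ Real.log d := Real.log_nonneg hd'
  refine ⟨⌈7 * Real.log d + 21⌉₊, natCast_mul_six_sevenths_pow_le hd (Nat.le_ceil _), ?_⟩
  have hceil := (Nat.ceil_lt_add_one (by positivity : 0 ≤ 7 * Real.log d + 21)).le
  calc 4 * ((⌈7 * Real.log d + 21⌉₊ : ℝ) + 1) * d
      ≤ 4 * (7 * Real.log d + 21 + 1 + 1) * d := by gcongr
    _ ≤ 160 * (d * Real.log d + d) := by nlinarith [mul_nonneg (zero_le_one.trans hd') hlog]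
    _ ≤ c := hc

theorem one_sub_le_bernProb_vnorm_mulVec_sub_sq_le (hU : Uᵀ * U = 1)
    (hXU : LinearMap.range X.mulVecLin ≤ LinearMap.range U.mulVecLin) {β : Fin d → ℝ}
    (hβ : Uᵀ *ᵥ (y - X *ᵥ β) = 0) (hp : ∀ i, p i ∈ Set.Icc 0 1) {θ η δ : ℝ} {m : ℕ} (hθ : 0 ≤ θ)
    (hpU : ∀ i, p i < 1 → U i ⬝ᵥ U i ≤ θ * p i) (hmθ : (m + 1) * θ ≤ η) (hη : η ≤ 1) (hδ : δ < 1)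
    (hε : 0 < ε) :
    1 - (d * ((2 - δ) / (2 - η)) ^ (m + 1) + θ / ((1 - δ) ^ 2 * ε / 4)) ≤
      bernProb p fun e => ∀ βt,
        (∀ β', weightedLoss X y (sampleWeight p e) βt ≤ weightedLoss X y (sampleWeight p e) β') →
          vnorm (X *ᵥ (β - βt)) ^ 2 ≤ ε * vnorm (y - X *ᵥ β) ^ 2 := by
  have hδ' : 0 < (1 - δ) ^ 2 := pow_pos (sub_pos.2 hδ) 2
  have hgram := bernProb_exists_sum_sampleWeight_mul_sq_lt_le hU hp
    ((by positivity : 0 ≤ (m + 1) * θ).trans hmθ) hη (hδ.trans one_lt_two) fun i hi => by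
      grw [hpU i hi, ← mul_assoc, hmθ]
      exact (hp i).1
  have hresidual := bernProb_lt_dotProduct_transpose_mulVec_le hp hθ hpU hβ
    (τ := (1 - δ) ^ 2 * ε / 4) (by positivity)
  rw [Fintype.card_fin] at hgram
  refine (sub_le_sub_left (add_le_add hgram hresidual) 1).trans
    (one_sub_bernProb_add_le hp fun e hlow hsmall βt hmin => ?_)
  push Not at hlow hsmall
  have hbound := sq_mul_vnorm_mulVec_sub_sq_le_of_weightedLoss_le hU hXU (sub_pos.2 hδ).le hlow
    (hmin β)
  refine le_of_mul_le_mul_left ?_ hδ'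
  rw [vnorm_sq (y - X *ᵥ β)]
  linarith

theorem four_fifths_le_bernProb_of_leverageScore_le (hd : 0 < d) (hX : IsUnit (Xᵀ * X).det)
    (hU : Uᵀ * U = 1) (hXU : LinearMap.range X.mulVecLin ≤ LinearMap.range U.mulVecLin)
    (hε : 0 < ε) (hc : 160 * (d * Real.log d + d / min ε 1) ≤ c)
    (hp : ∀ i, p i ∈ Set.Icc (min 1 (c * leverageScore X i / d)) 1) :
    0.8 ≤ bernProb p fun e => ∀ βt,
      (∀ β, weightedLoss X y (sampleWeight p e) βt ≤ weightedLoss X y (sampleWeight p e) β) →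
        vnorm (X *ᵥ (leastSquares X y - βt)) ^ 2 ≤
          ε * vnorm (y - X *ᵥ leastSquares X y) ^ 2 := by
  have hd' : (0 : ℝ) < d := by exact_mod_cast hd
  have hε' : 0 < min ε 1 := lt_min hε one_pos
  have hlog : 0 ≤ d * Real.log d := by positivity
  have hone : (d : ℝ) ≤ d / min ε 1 := le_div_self hd'.le hε' (min_le_right _ _)
  have hdε : d / ε ≤ d / min ε 1 := by gcongr; exact min_le_left _ _
  have hc0 : 0 < c := by linarith
  obtain ⟨m, hfail, hmc⟩ :=
    exists_nat_mul_six_sevenths_pow_le_and_mul_le (c := c) hd (by linarith)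
  have hprob := one_sub_le_bernProb_vnorm_mulVec_sub_sq_le (θ := d / c) (η := 1 / 4) (δ := 1 / 2)
    (m := m) hU hXU (transpose_mulVec_sub_mulVec_leastSquares_of_range_le hX hU hXU y)
    (fun i => mem_Icc_zero_one_of_leverageScore hX hU hXU hc0.le hd'.le (hp i)) (by positivity)
    (fun i hi => dotProduct_self_le_div_mul_of_leverageScore hX hU hXU hc0 hd' (hp i).1 hi)
    (by rw [← mul_div_assoc, div_le_iff₀ hc0]; linarith) (by norm_num) (by norm_num) hε
  have hresidual : d / c / ((1 - 1 / 2) ^ 2 * ε / 4) ≤ 1 / 10 := by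
    rw [div_div, div_le_iff₀ (by positivity)]
    have hcε : 160 * (d / ε) ≤ c := by linarith
    rw [← mul_div_assoc, div_le_iff₀ hε] at hcε
    linarith
  refine hprob.trans' ?_
  rw [show ((2 - 1 / 2) / (2 - 1 / 4) : ℝ) = 6 / 7 by norm_num]
  linarith

end SamplingProbability

theorem stmt_11_general :
    ∃ C₀ : ℝ, 0 < C₀ ∧
      ∀ (n d : ℕ) (X : Matrix (Fin n) (Fin d) ℝ) (y : Fin n → ℝ)
        (U : Matrix (Fin n) (Fin d) ℝ) (ε c : ℝ) (p : Fin n → ℝ),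
        0 < d → X.rank = d →
        Uᵀ * U = 1 →
        LinearMap.range X.mulVecLin ≤ LinearMap.range U.mulVecLin →
        0 < ε →
        C₀ * (d * Real.log d + d / min ε 1) ≤ c →
        (∀ i, p i ∈ Set.Icc (min 1 (c * leverageScore X i / d)) 1) →
        0.8 ≤ bernProb p fun e => ∀ βt,
          (∀ β, weightedLoss X y (sampleWeight p e) βt ≤ weightedLoss X y (sampleWeight p e) β) →
            vnorm (y - X *ᵥ βt) ^ 2 ≤ (1 + ε) * vnorm (y - X *ᵥ leastSquares X y) ^ 2 ∧
            vnorm (leastSquares X y - βt) ^ 2 ≤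
              ε / sigmaMin X ^ 2 * vnorm (y - X *ᵥ leastSquares X y) ^ 2 ∧
            ∀ γ : ℝ, 0 < γ → γ ≤ 1 → γ * vnorm y ≤ vnorm ((U * Uᵀ) *ᵥ y) →
              vnorm (leastSquares X y - βt) ^ 2 ≤
                ε * (sigmaMax X / sigmaMin X) ^ 2 * (γ⁻¹ ^ 2 - 1) *
                  vnorm (leastSquares X y) ^ 2 := by
  refine ⟨160, by norm_num, fun n d X y U ε c p hd hX hU hXU hε hc hp => ?_⟩
  have hc0 : 0 ≤ c := hc.trans' (by positivity)
  have hgram := isUnit_det_transpose_mul_self_of_rank_eq (hX.trans (Fintype.card_fin d).symm)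
  have hσ : 0 < sigmaMin X :=
    sigmaMin_pos_of_mul_eq_one hd ((Matrix.mul_assoc _ _ _).trans (nonsing_inv_mul _ hgram))
  have hβ := transpose_mulVec_sub_mulVec_leastSquares hgram y
  have hprob := four_fifths_le_bernProb_of_leverageScore_le (y := y) hd hgram hU hXU hε hc hp
  refine hprob.trans (bernProb_mono (fun i => mem_Icc_zero_one_of_leverageScore hgram hU hXU hc0
    d.cast_nonneg (hp i)) fun e he βt hmin => ?_)
  have h := he βt hmin
  refine ⟨vnorm_sub_mulVec_sq_le_one_add_mul hβ h, vnorm_sub_sq_le_div_sigmaMin_sq_mul hσ h,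
    fun γ hγ0 hγ1 hγ => vnorm_sub_sq_le_mul_sigmaMax_div_sigmaMin_sq_mul hσ hβ hε.le h hγ0 hγ1 ?_⟩
  rwa [mulVec_leastSquares hgram hU hXU]

/-- Sharpened error bound for leverage-score sampling based least-squares regression:
there is an absolute constant `C₀ > 0` such that whenever `c ≥ C₀(d ln d + d/ε)`,
with probability at least `0.8` over leverage-score sampling with parameter `c`,
every minimizer `β̃` of the sampled objective `β ↦ Σ_{i:δ_i=1} p_i⁻¹ (y_i − x^(i)β)²`
satisfies `‖y − Xβ̃‖² ≤ (1+ε)‖y − Xβ_lsr‖²` and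
`‖β_lsr − β̃‖² ≤ (ε/σ_min²(X))‖y − Xβ_lsr‖²`, and moreover, if `γ ∈ (0,1]` satisfies
`‖UUᵀy‖ ≥ γ‖y‖`, also `‖β_lsr − β̃‖² ≤ ε κ²(X)(γ⁻² − 1)‖β_lsr‖²`. -/
theorem stmt_11 :
    ∃ C₀ : ℝ, 0 < C₀ ∧
      ∀ (n d : ℕ) (X : Matrix (Fin n) (Fin d) ℝ) (y : Fin n → ℝ)
        (U : Matrix (Fin n) (Fin d) ℝ) (ε : ℝ) (c : ℕ),
        2 ≤ d → d ≤ n → X.rank = d →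
        Uᵀ * U = 1 →
        LinearMap.range U.mulVecLin = LinearMap.range X.mulVecLin →
        ε ∈ Set.Ioo (0 : ℝ) 1 →
        C₀ * (d * Real.log d + d / ε) ≤ c →
        ∀ (βlsr : Fin d → ℝ), βlsr = ((Xᵀ * X)⁻¹ * Xᵀ).mulVec y →
        ∀ (l : Fin n → ℝ), l = (fun i => (X * (Xᵀ * X)⁻¹ * Xᵀ) i i) →
        ∀ (prob : Fin n → ℝ), prob = (fun i => min 1 ((c : ℝ) * l i / d)) →
        ∀ (obj : (Fin n → Bool) → (Fin d → ℝ) → ℝ),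
          obj = (fun e β => ∑ i, if e i then (prob i)⁻¹ * (y i - ∑ j, X i j * β j) ^ 2 else 0) →
        (0.8 : ℝ) ≤
          ∑ e : Fin n → Bool,
            if (∀ βt : Fin d → ℝ, (∀ β, obj e βt ≤ obj e β) →
                  vnorm (y - X.mulVec βt) ^ 2 ≤ (1 + ε) * vnorm (y - X.mulVec βlsr) ^ 2 ∧
                  vnorm (βlsr - βt) ^ 2
                    ≤ ε / sigmaMin X ^ 2 * vnorm (y - X.mulVec βlsr) ^ 2 ∧
                  ∀ γ : ℝ, 0 < γ → γ ≤ 1 → γ * vnorm y ≤ vnorm ((U * Uᵀ).mulVec y) →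
                    vnorm (βlsr - βt) ^ 2
                      ≤ ε * (sigmaMax X / sigmaMin X) ^ 2 * (γ⁻¹ ^ 2 - 1) * vnorm βlsr ^ 2)
            then bernWeight prob e else 0 := by
  obtain ⟨C₀, hC₀, h⟩ := stmt_11_general
  refine ⟨C₀, hC₀, ?_⟩
  rintro n d X y U ε c hd - hX hU hUX ⟨hε0, hε1⟩ hc _ rfl _ rfl prob hprob obj hobj
  have hloss : obj = fun e => weightedLoss X y (sampleWeight prob e) := by
    rw [hobj]
    funext e β
    simp only [weightedLoss, sampleWeight, ite_mul, zero_mul, mulVec, dotProduct]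
  rw [hloss]
  refine h n d X y U ε c prob (by lia) hX hU hUX.ge hε0 (by rwa [min_eq_left hε1.le]) fun i => ?_
  rw [hprob]
  exact ⟨le_rfl, min_le_left _ _⟩
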